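/- arXiv:2112.11863 — 3 statements merged into one kernel-verified Lean document; each statement's English description precedes it below -/
import Mathlib

section
/- Let ν, a0, a1, a2, a3, a4 be real parameters. Define X(x) = a0 + a1*x + a2*x^2 + a3*x^3 + a4*x^4, Y(y) = a0 + a1*y + a2*y^2 + a3*y^3 + a4*y^4, F(x,y) = X(x)*y^2 - x^2*Y(y), G(x,y) = X(x)*(a0*ν^2 + 2*a3*ν*y^3 - a4*y^4 + 2*a4*ν*y^4) + (a0 - 2*a0*ν - 2*a1*ν*x - a4*ν^2*x^4)*Y(y), and H(x,y) = (ν*x + y)*((ν*x - y)*(a1 - a3*x*y) - 2*(1-ν)*(a0 - a4*x^2*y^2)). Then on the open set where F ≠ 0, x ≠ y and Y ≠ 0, one has ∂/∂x [ G(x,y)*y/(F(x,y)*Y(y)) + H(x,y)*x/(F(x,y)*(x-y)) ] = -2*(1-ν)*(ν*x+y)/(x-y)^3. -/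
/-- The quartic metric function `X` (also giving `Y` when evaluated at `y`). -/
def Xq (a0 a1 a2 a3 a4 t : ℝ) : ℝ := a0 + a1*t + a2*t^2 + a3*t^3 + a4*t^4

/-- The Chen-Teo metric function `F`. -/
def Fq (a0 a1 a2 a3 a4 x y : ℝ) : ℝ :=
  Xq a0 a1 a2 a3 a4 x * y^2 - x^2 * Xq a0 a1 a2 a3 a4 y

/-- The Chen-Teo metric function `G`. -/
def Gq (ν a0 a1 a2 a3 a4 x y : ℝ) : ℝ :=
  Xq a0 a1 a2 a3 a4 x * (a0*ν^2 + 2*a3*ν*y^3 - a4*y^4 + 2*a4*ν*y^4)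
    + (a0 - 2*a0*ν - 2*a1*ν*x - a4*ν^2*x^4) * Xq a0 a1 a2 a3 a4 y

/-- The Chen-Teo metric function `H`. -/
def Hq (ν a0 a1 a3 a4 x y : ℝ) : ℝ :=
  (ν*x + y)*((ν*x - y)*(a1 - a3*x*y) - 2*(1 - ν)*(a0 - a4*x^2*y^2))

/-- Partial fractions in `x`: up to a term depending only on `y`, the Chen-Teo combination of
`F`, `G`, `H` is a rational function of `x` whose only pole is at `x = y`. -/
theorem chenTeo_partial_fractions (ν a0 a1 a2 a3 a4 x y : ℝ)
    (hF : Fq a0 a1 a2 a3 a4 x y ≠ 0) (hxy : x ≠ y)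
    (hY : Xq a0 a1 a2 a3 a4 y ≠ 0) :
    Gq ν a0 a1 a2 a3 a4 x y * y / (Fq a0 a1 a2 a3 a4 x y * Xq a0 a1 a2 a3 a4 y)
        + Hq ν a0 a1 a3 a4 x y * x / (Fq a0 a1 a2 a3 a4 x y * (x - y))
      = (1 - ν) * (2*ν*(x - y) + (1 + ν)*y) / (x - y)^2
        + (2*a3*ν*y^2 + (2*ν - 1)*a4*y^3 - ν^2*(a1 + a2*y + a3*y^2 + a4*y^3))
          / Xq a0 a1 a2 a3 a4 y := by
  have hxy' : x - y ≠ 0 := sub_ne_zero.mpr hxy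
  rw [div_add_div _ _ (mul_ne_zero hF hY) (mul_ne_zero hF hxy'),
    div_add_div _ _ (pow_ne_zero 2 hxy') hY,
    div_eq_div_iff (mul_ne_zero (mul_ne_zero hF hY) (mul_ne_zero hF hxy'))
      (mul_ne_zero (pow_ne_zero 2 hxy') hY)]
  have key : (Gq ν a0 a1 a2 a3 a4 x y * y * (x - y)
        + Hq ν a0 a1 a3 a4 x y * x * Xq a0 a1 a2 a3 a4 y) * (x - y)
      = Fq a0 a1 a2 a3 a4 x y
        * ((1 - ν) * (2*ν*(x - y) + (1 + ν)*y) * Xq a0 a1 a2 a3 a4 y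
          + (x - y)^2 * (2*a3*ν*y^2 + (2*ν - 1)*a4*y^3
            - ν^2*(a1 + a2*y + a3*y^2 + a4*y^3))) := by
    simp only [Gq, Hq, Fq, Xq]
    ring
  linear_combination
    (Fq a0 a1 a2 a3 a4 x y * Xq a0 a1 a2 a3 a4 y * (x - y)) * key

theorem chenTeo_dx_identity (ν a0 a1 a2 a3 a4 x y : ℝ)
    (hF : Fq a0 a1 a2 a3 a4 x y ≠ 0) (hxy : x ≠ y)
    (hY : Xq a0 a1 a2 a3 a4 y ≠ 0) :
    HasDerivAt (fun t : ℝ =>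
        Gq ν a0 a1 a2 a3 a4 t y * y / (Fq a0 a1 a2 a3 a4 t y * Xq a0 a1 a2 a3 a4 y)
          + Hq ν a0 a1 a3 a4 t y * t / (Fq a0 a1 a2 a3 a4 t y * (t - y)))
      (-2*(1 - ν)*(ν*x + y)/(x - y)^3) x := by
  have hxy' : x - y ≠ 0 := sub_ne_zero.mpr hxy
  have hFc : Continuous fun t : ℝ => Fq a0 a1 a2 a3 a4 t y := by
    unfold Fq Xq
    fun_prop
  have hsub : HasDerivAt (fun t : ℝ => t - y) 1 x := (hasDerivAt_id x).sub_const y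
  have hderiv := (((((hsub.const_mul (2*ν)).add_const ((1 + ν)*y)).const_mul (1 - ν)).fun_div
    (hsub.fun_pow 2) (pow_ne_zero 2 hxy')).add_const
      ((2*a3*ν*y^2 + (2*ν - 1)*a4*y^3 - ν^2*(a1 + a2*y + a3*y^2 + a4*y^3))
        / Xq a0 a1 a2 a3 a4 y))
  refine (hderiv.congr_of_eventuallyEq ?_).congr_deriv ?_
  · filter_upwards [hFc.continuousAt.eventually_ne hF, eventually_ne_nhds hxy] with t htF hty
    exact chenTeo_partial_fractions ν a0 a1 a2 a3 a4 t y htF hty hY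
  · field_simp
    ring
end

section
/- With X, Y, F, G, H defined as in the Chen-Teo metric (X(x) = a0 + a1*x + a2*x^2 + a3*x^3 + a4*x^4, Y(y) analogous, F = X*y^2 - x^2*Y, G = X*(a0*ν^2 + 2*a3*ν*y^3 - a4*y^4 + 2*a4*ν*y^4) + (a0 - 2*a0*ν - 2*a1*ν*x - a4*ν^2*x^4)*Y, H = (ν*x+y)*((ν*x-y)*(a1 - a3*x*y) - 2*(1-ν)*(a0 - a4*x^2*y^2))), on the set where F ≠ 0, x ≠ y and X ≠ 0, one has ∂/∂y [ G*x/(F*X) + H*y/(F*(x-y)) ] = 2*(1-ν)*(ν*x+y)/(x-y)^3. -/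
/-- Clearing denominators, `G x / (F X) + H y / (F (x - y))` splits into a function of `x` alone
plus an explicit rational function of `x` and `y`. -/
theorem chenTeo_polynomial_identity (ν a0 a1 a2 a3 a4 x y : ℝ) :
    Gq ν a0 a1 a2 a3 a4 x y * x * (x - y)^2
        + Hq ν a0 a1 a3 a4 x y * y * Xq a0 a1 a2 a3 a4 x * (x - y)
      = Fq a0 a1 a2 a3 a4 x y
        * ((a1 + (1 - 2*ν)*(a2*x + a3*x^2) + (1 - ν)^2*a4*x^3) * (x - y)^2
          + (1 - ν)*Xq a0 a1 a2 a3 a4 x*((1 + ν)*x - 2*(x - y))) := by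
  simp only [Gq, Hq, Fq, Xq]
  ring

/-- The closed form of `G x / (F X) + H y / (F (x - y))`, in which `F` has cancelled. -/
theorem chenTeo_closed_form (ν a0 a1 a2 a3 a4 x y : ℝ)
    (hF : Fq a0 a1 a2 a3 a4 x y ≠ 0) (hxy : x ≠ y) (hX : Xq a0 a1 a2 a3 a4 x ≠ 0) :
    Gq ν a0 a1 a2 a3 a4 x y * x / (Fq a0 a1 a2 a3 a4 x y * Xq a0 a1 a2 a3 a4 x)
        + Hq ν a0 a1 a3 a4 x y * y / (Fq a0 a1 a2 a3 a4 x y * (x - y))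
      = (a1 + (1 - 2*ν)*(a2*x + a3*x^2) + (1 - ν)^2*a4*x^3) / Xq a0 a1 a2 a3 a4 x
        + (1 - ν)*((1 + ν)*x - 2*(x - y)) / (x - y)^2 := by
  have hu : x - y ≠ 0 := sub_ne_zero.mpr hxy
  have key := chenTeo_polynomial_identity ν a0 a1 a2 a3 a4 x y
  generalize Gq ν a0 a1 a2 a3 a4 x y = G at *
  generalize Hq ν a0 a1 a3 a4 x y = H at *
  generalize Fq a0 a1 a2 a3 a4 x y = F at *
  generalize Xq a0 a1 a2 a3 a4 x = X at *
  rw [div_add_div _ _ (mul_ne_zero hF hX) (mul_ne_zero hF hu),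
    div_add_div _ _ hX (pow_ne_zero 2 hu), div_eq_div_iff (by positivity) (by positivity)]
  linear_combination F * X * (x - y) * key

theorem chenTeo_dy_identity (ν a0 a1 a2 a3 a4 x y : ℝ)
    (hF : Fq a0 a1 a2 a3 a4 x y ≠ 0) (hxy : x ≠ y)
    (hX : Xq a0 a1 a2 a3 a4 x ≠ 0) :
    HasDerivAt (fun s : ℝ =>
        Gq ν a0 a1 a2 a3 a4 x s * x / (Fq a0 a1 a2 a3 a4 x s * Xq a0 a1 a2 a3 a4 x)
          + Hq ν a0 a1 a3 a4 x s * s / (Fq a0 a1 a2 a3 a4 x s * (x - s)))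
      (2*(1 - ν)*(ν*x + y)/(x - y)^3) y := by
  have hu : x - y ≠ 0 := sub_ne_zero.mpr hxy
  have hcont : Continuous fun s : ℝ => Fq a0 a1 a2 a3 a4 x s := by
    unfold Fq Xq
    fun_prop
  have hsub : HasDerivAt (fun s : ℝ => x - s) (-1) y := (hasDerivAt_id' y).const_sub x
  have hderiv := (((((hsub.const_mul 2).const_sub ((1 + ν)*x)).const_mul (1 - ν)).fun_div
    (hsub.fun_pow 2) (pow_ne_zero 2 hu)).const_add
      ((a1 + (1 - 2*ν)*(a2*x + a3*x^2) + (1 - ν)^2*a4*x^3) / Xq a0 a1 a2 a3 a4 x))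
  refine (hderiv.congr_of_eventuallyEq ?_).congr_deriv ?_
  · filter_upwards [hcont.continuousAt.eventually_ne hF, eventually_ne_nhds hxy.symm] with s hs hsx
    exact chenTeo_closed_form ν a0 a1 a2 a3 a4 x s hs hsx.symm hX
  · field_simp
    ring
end

section
/- Let ν ∈ (-1, -1/2) and x1 < x2 = -1 < x3 < 0 with x1 < -1. Define H̃2(x) = -H(x, x1)/(νx + x1) where H(x,y) = (νx+y)((νx-y)(a1 - a3xy) - 2(1-ν)(a0 - a4x²y²)) with coefficients a0,...,a4 given by Vieta's formulas for roots x1, x2, x3, x4=0 and a4 = 1. Then H̃2 is concave in x on [x2, x3] (its second derivative equals 2x1(-2x1 + ν(1 + x1 - x3)) < 0), and H̃2(-1) = (ν - x1)x1(1 + x1) > 0 and H̃2(x3) = x1(x1 - x3)x3(x1 + νx3) > 0; hence H̃2 > 0 on [x2, x3]. -/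
lemma deriv_deriv_quadratic (a b c x : ℝ) :
    deriv (deriv fun t : ℝ => a * t ^ 2 + b * t + c) x = 2 * a := by
  have h : deriv (fun t : ℝ => a * t ^ 2 + b * t + c) = fun t => 2 * a * t + b := by
    funext t
    have := ((((hasDerivAt_id t).pow 2).const_mul a).add
      ((hasDerivAt_id t).const_mul b)).add_const c
    refine (this.congr_deriv ?_).deriv
    simp
    ring
  rw [h]
  exact ((((hasDerivAt_id x).const_mul (2 * a)).add_const b).congr_deriv (mul_one _)).deriv

/-- A quadratic with nonpositive leading coefficient that is positive at the endpoints of an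
interval is positive on the interval. -/
lemma quadratic_pos_of_endpoints {a b c l r x : ℝ} (ha : a ≤ 0)
    (hl : 0 < a * l ^ 2 + b * l + c) (hr : 0 < a * r ^ 2 + b * r + c)
    (hx : x ∈ Set.Icc l r) : 0 < a * x ^ 2 + b * x + c := by
  obtain ⟨hlx, hxr⟩ := hx
  rcases hlx.eq_or_lt with rfl | hlx
  · exact hl
  have hlr : 0 < r - l := by linarith
  have h₁ := mul_nonneg hl.le (sub_nonneg.2 hxr)
  have h₂ := mul_pos hr (sub_pos.2 hlx)
  have h₃ := mul_nonneg (mul_nonneg (neg_nonneg.2 ha)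
    (mul_nonneg (sub_pos.2 hlx).le (sub_nonneg.2 hxr))) hlr.le
  refine pos_of_mul_pos_left (b := r - l) ?_ hlr.le
  linear_combination h₁ + h₂ + h₃

/-- Positivity of `H̃2(x) = -H(x,x1)/(νx + x1)` on the rod `R2` of the Chen-Teo
instanton (with `x2 = -1`, `x4 = 0`, `a4 = 1`, and Vieta coefficients):
`H̃2` is concave with the stated second derivative, positive at both endpoints
with the stated values, hence positive on `[x2, x3] = [-1, x3]`.
Since `H(x,y)` contains the factor `(νx + y)`, the quotient `H̃2` is the
polynomial `-((νx - x1)(a1 - a3 x x1) - 2(1-ν)(a0 - x² x1²))`. -/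
theorem chenTeo_rod2_positivity (ν x1 x3 : ℝ)
    (hν : ν ∈ Set.Ioo (-1 : ℝ) (-1/2))
    (hx1 : x1 < -1) (hx3 : -1 < x3) (hx30 : x3 < 0) :
    -- Vieta coefficients for roots x1, x2 = -1, x3, x4 = 0 with a4 = 1
    ∀ a0 a1 a2 a3 : ℝ,
      a0 = 1*x1*(-1)*x3*0 →
      a1 = -(x1*(-1)*x3 + x1*(-1)*0 + x1*x3*0 + (-1)*x3*0) →
      a2 = x1*(-1) + x1*x3 + (-1)*x3 + x1*0 + (-1)*0 + x3*0 →
      a3 = -(x1 + (-1) + x3 + 0) →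
      ∀ tildeH2 : ℝ → ℝ,
        (∀ x : ℝ, tildeH2 x
          = -((ν*x - x1)*(a1 - a3*x*x1) - 2*(1 - ν)*(a0 - 1*x^2*x1^2))) →
        ((∀ x : ℝ, deriv (deriv tildeH2) x = 2*x1*(-2*x1 + ν*(1 + x1 - x3)))
          ∧ 2*x1*(-2*x1 + ν*(1 + x1 - x3)) < 0)
        ∧ (tildeH2 (-1) = (ν - x1)*x1*(1 + x1) ∧ 0 < tildeH2 (-1))
        ∧ (tildeH2 x3 = x1*(x1 - x3)*x3*(x1 + ν*x3) ∧ 0 < tildeH2 x3)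
        ∧ ∀ x ∈ Set.Icc (-1 : ℝ) x3, 0 < tildeH2 x := by
  intro a0 a1 a2 a3 h0 h1 _ h3 f hf
  obtain ⟨hν₁, hν₂⟩ := hν
  have hquad : ∀ x, f x = x1 * (-2 * x1 + ν * (1 + x1 - x3)) * x ^ 2
      + -(ν * x1 * x3 + x1 ^ 2 * (1 - x1 - x3)) * x + x1 ^ 2 * x3 := by
    intro x
    rw [hf, h0, h1, h3]
    ring
  have hfactor : 0 < -2 * x1 + ν * (1 + x1 - x3) := by
    rcases le_total (1 + x1 - x3) 0 with h | h <;> nlinarith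
  have hlead : x1 * (-2 * x1 + ν * (1 + x1 - x3)) < 0 :=
    mul_neg_of_neg_of_pos (by linarith) hfactor
  have hleft : f (-1) = (ν - x1) * x1 * (1 + x1) := by
    rw [hquad]
    ring
  have hright : f x3 = x1 * (x1 - x3) * x3 * (x1 + ν * x3) := by
    rw [hquad]
    ring
  have hleft_pos : 0 < f (-1) := by
    rw [hleft]
    exact mul_pos_of_neg_of_neg
      (mul_neg_of_pos_of_neg (by linarith) (by linarith)) (by linarith)
  have hright_pos : 0 < f x3 := by
    rw [hright]
    exact mul_pos_of_neg_of_neg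
      (mul_neg_of_pos_of_neg (mul_pos_of_neg_of_neg (by linarith) (by linarith)) hx30)
      (by nlinarith)
  refine ⟨⟨fun x => ?_, by linarith⟩, ⟨hleft, hleft_pos⟩, ⟨hright, hright_pos⟩, fun x hx => ?_⟩
  · rw [funext hquad, deriv_deriv_quadratic]
    ring
  · rw [hquad] at hleft_pos hright_pos ⊢
    exact quadratic_pos_of_endpoints hlead.le hleft_pos hright_pos hx
end
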